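/- Fix x ∈ H, q ∈ K, z, ζ ∈ Ξ, u ∈ L²(ν₁) and θ, θ' ∈ L²(ν₂), and define γ₂ : K → ℝ by γ₂(w) := sup_{a∈U}(γ(a,w)−1) if θ(w) ≥ θ'(w) and γ₂(w) := inf_{a∈U}(γ(a,w)−1) if θ(w) < θ'(w); assume γ₂ is Borel measurable (this holds e.g. when U is countable). Then η'−1 ≤ γ₂(w) ≤ C_γ−1 for all w ∈ K, and ψ(x,q,z,ζ,u,θ) − ψ(x,q,z,ζ,u,θ') ≤ ∫_K (θ(w)−θ'(w)) γ₂(w) dν₂(w). -/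

import Mathlib

open MeasureTheory RealInnerProductSpace

/-!
For each control, changing `θ'` into `θ` changes the cost by the integral of `θ - θ'` against the
kernel of that control. Pointwise, this integrand is largest when the kernel is replaced by its
supremum over the controls where `θ ≥ θ'` and by its infimum where `θ < θ'`. The resulting bound
does not depend on the control, so it survives taking the infimum of both costs.
-/

section BoundedFamilies

theorem ciInf_sub_ciInf_le {ι α : Type*} [Nonempty ι] [ConditionallyCompleteLattice α]
    [AddCommGroup α] [IsOrderedAddMonoid α] {f g : ι → α} {c : α}
    (hf : BddBelow (Set.range f)) (h : ∀ i, f i - g i ≤ c) :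
    (⨅ i, f i) - ⨅ i, g i ≤ c := by
  rw [sub_le_comm]
  exact le_ciInf fun i => (sub_le_sub_right (ciInf_le hf i) c).trans (sub_le_comm.mp (h i))

theorem bddBelow_range_clm_apply {ι E : Type*} [SeminormedAddCommGroup E] [NormedSpace ℝ E]
    (φ : E →L[ℝ] ℝ) {v : ι → E} {C : ℝ} (hv : ∀ i, ‖v i‖ ≤ C) :
    BddBelow (Set.range fun i => φ (v i)) :=
  ⟨-(‖φ‖ * C), Set.forall_mem_range.mpr fun i =>
    neg_le_of_abs_le (φ.le_opNorm_of_le (hv i))⟩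

variable {ι X : Type*} [MeasurableSpace X] {μ : Measure X} {m M : ℝ} {f : X → ℝ}

theorem integrable_mul_of_mem_Icc {k : X → ℝ} (hf : Integrable f μ)
    (hk_meas : AEStronglyMeasurable k μ) (hk : ∀ w, k w ∈ Set.Icc m M) :
    Integrable (fun w => f w * k w) μ :=
  hf.mul_bdd hk_meas (ae_of_all _ fun w => abs_le_max_abs_abs (hk w).1 (hk w).2)

theorem abs_integral_mul_le_of_mem_Icc {k : X → ℝ} (hf : Integrable f μ)
    (hk : ∀ w, k w ∈ Set.Icc m M) :
    |∫ w, f w * k w ∂μ| ≤ ∫ w, |f w| * max |m| |M| ∂μ := by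
  rw [← Real.norm_eq_abs]
  refine norm_integral_le_of_norm_le (hf.abs.mul_const _) (ae_of_all _ fun w => ?_)
  rw [Real.norm_eq_abs, abs_mul]
  gcongr
  exact abs_le_max_abs_abs (hk w).1 (hk w).2

theorem bddBelow_range_integral_mul {κ : ι → X → ℝ} (hf : Integrable f μ)
    (hκ : ∀ i w, κ i w ∈ Set.Icc m M) :
    BddBelow (Set.range fun i => ∫ w, f w * κ i w ∂μ) :=
  ⟨_, Set.forall_mem_range.mpr fun i =>
    neg_le_of_abs_le (abs_integral_mul_le_of_mem_Icc hf (hκ i))⟩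

end BoundedFamilies

section ExtremalKernel

/-- The pointwise extremal member of a family of kernels `κ`, relative to `f` and `g`: the paper's
`γ₂` is the case `κ a w = γ a w - 1`, `f = θ`, `g = θ'`. Points where `f = g` are assigned the
supremum. The real `⨆` and `⨅` are meaningful only where the family is bounded. -/
noncomputable def extremalKernel {U X : Type*} (κ : U → X → ℝ) (f g : X → ℝ) (w : X) : ℝ :=
  if g w ≤ f w then ⨆ a, κ a w else ⨅ a, κ a w

variable {U X : Type*} {κ : U → X → ℝ} {f g : X → ℝ} {m M : ℝ} {w : X}

theorem extremalKernel_mem_Icc [Nonempty U] (hκ : ∀ a, κ a w ∈ Set.Icc m M) :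
    extremalKernel κ f g w ∈ Set.Icc m M := by
  let a := Classical.arbitrary U
  unfold extremalKernel
  split_ifs
  · exact ⟨le_ciSup_of_le ⟨M, Set.forall_mem_range.mpr fun a => (hκ a).2⟩ a (hκ a).1,
      ciSup_le fun a => (hκ a).2⟩
  · exact ⟨le_ciInf fun a => (hκ a).1,
      ciInf_le_of_le ⟨m, Set.forall_mem_range.mpr fun a => (hκ a).1⟩ a (hκ a).2⟩

theorem sub_mul_le_sub_mul_extremalKernel (h_above : BddAbove (Set.range fun a => κ a w))
    (h_below : BddBelow (Set.range fun a => κ a w)) (a : U) :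
    (f w - g w) * κ a w ≤ (f w - g w) * extremalKernel κ f g w := by
  unfold extremalKernel
  split_ifs with hgf
  · exact mul_le_mul_of_nonneg_left (le_ciSup h_above a) (sub_nonneg.mpr hgf)
  · exact mul_le_mul_of_nonpos_left (ciInf_le h_below a) (sub_nonpos.mpr (not_le.mp hgf).le)

variable [MeasurableSpace X] {μ : Measure X}

theorem integral_mul_sub_integral_mul_le_extremalKernel (hf : Integrable f μ)
    (hg : Integrable g μ) (hκ_meas : ∀ a, AEStronglyMeasurable (κ a) μ)
    (hκ : ∀ a w, κ a w ∈ Set.Icc m M)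
    (hext_meas : AEStronglyMeasurable (extremalKernel κ f g) μ) (a : U) :
    ∫ w, f w * κ a w ∂μ - ∫ w, g w * κ a w ∂μ
      ≤ ∫ w, (f w - g w) * extremalKernel κ f g w ∂μ := by
  have : Nonempty U := ⟨a⟩
  have hfg : Integrable (fun w => f w - g w) μ := hf.sub hg
  calc ∫ w, f w * κ a w ∂μ - ∫ w, g w * κ a w ∂μ
      = ∫ w, (f w - g w) * κ a w ∂μ := by
        simp only [sub_mul]
        exact (integral_sub (integrable_mul_of_mem_Icc hf (hκ_meas a) (hκ a))
          (integrable_mul_of_mem_Icc hg (hκ_meas a) (hκ a))).symm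
    _ ≤ ∫ w, (f w - g w) * extremalKernel κ f g w ∂μ :=
        integral_mono (integrable_mul_of_mem_Icc hfg (hκ_meas a) (hκ a))
          (integrable_mul_of_mem_Icc hfg hext_meas fun w =>
            extremalKernel_mem_Icc fun a => hκ a w)
          fun w => sub_mul_le_sub_mul_extremalKernel
            ⟨M, Set.forall_mem_range.mpr fun a => (hκ a w).2⟩
            ⟨m, Set.forall_mem_range.mpr fun a => (hκ a w).1⟩ a

theorem ciInf_add_integral_mul_sub_ciInf_le_extremalKernel [Nonempty U] {c : U → ℝ}
    (hc : BddBelow (Set.range c)) (hf : Integrable f μ) (hg : Integrable g μ)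
    (hκ_meas : ∀ a, AEStronglyMeasurable (κ a) μ) (hκ : ∀ a w, κ a w ∈ Set.Icc m M)
    (hext_meas : AEStronglyMeasurable (extremalKernel κ f g) μ) :
    (⨅ a, (c a + ∫ w, f w * κ a w ∂μ)) - ⨅ a, (c a + ∫ w, g w * κ a w ∂μ)
      ≤ ∫ w, (f w - g w) * extremalKernel κ f g w ∂μ := by
  refine ciInf_sub_ciInf_le (hc.range_add (bddBelow_range_integral_mul hf hκ)) fun a => ?_
  rw [add_sub_add_left_eq_sub]
  exact integral_mul_sub_integral_mul_le_extremalKernel hf hg hκ_meas hκ hext_meas a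

end ExtremalKernel

section Hamiltonian

variable {H Ξ X U : Type*} [SeminormedAddCommGroup H] [NormedSpace ℝ H]
  [SeminormedAddCommGroup Ξ] [InnerProductSpace ℝ Ξ] [MeasurableSpace X] {μ : Measure X}

theorem bddBelow_range_add_inner_add_inner_add_integral {T : H →L[ℝ] Ξ} {l : U → ℝ} {b : U → H}
    {ρ : U → Ξ} {k : U → X → ℝ} {v : X → ℝ} {B C m M : ℝ} (z ζ : Ξ) (hl : ∀ a, |l a| ≤ B)
    (hbρ : ∀ a, ‖b a‖ + ‖ρ a‖ ≤ C) (hv : Integrable v μ) (hk : ∀ a w, k a w ∈ Set.Icc m M) :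
    BddBelow (Set.range fun a => l a + ⟪z, T (b a)⟫ + ⟪ζ, ρ a⟫ + ∫ w, v w * k a w ∂μ) := by
  have hb : ∀ a, ‖b a‖ ≤ C := fun a => (le_add_of_nonneg_right (norm_nonneg _)).trans (hbρ a)
  have hρ : ∀ a, ‖ρ a‖ ≤ C := fun a => (le_add_of_nonneg_left (norm_nonneg _)).trans (hbρ a)
  have hl_below : BddBelow (Set.range l) :=
    ⟨-B, Set.forall_mem_range.mpr fun a => neg_le_of_abs_le (hl a)⟩
  exact ((hl_below.range_add (bddBelow_range_clm_apply (innerSL ℝ z ∘L T) hb)).range_add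
    (bddBelow_range_clm_apply (innerSL ℝ ζ) hρ)).range_add (bddBelow_range_integral_mul hv hk)

/-- Here `c` collects the terms of the cost that do not involve `θ`. -/
theorem hamiltonian_kernel_estimate_theta_general [Nonempty U] {c : U → ℝ} {γ : U → X → ℝ}
    {θ θ' γ₂ : X → ℝ} {η' Cγ : ℝ} (hc : BddBelow (Set.range c))
    (hθ : Integrable θ μ) (hθ' : Integrable θ' μ)
    (hγ_meas : ∀ a, AEStronglyMeasurable (γ a) μ)
    (hγ_lb : ∀ a w, η' ≤ γ a w) (hγ_ub : ∀ a w, γ a w ≤ Cγ)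
    (hγ₂_meas : AEStronglyMeasurable γ₂ μ)
    (hγ₂_def : ∀ w, γ₂ w = if θ' w ≤ θ w then ⨆ a, (γ a w - 1) else ⨅ a, (γ a w - 1)) :
    (∀ w, η' - 1 ≤ γ₂ w ∧ γ₂ w ≤ Cγ - 1) ∧
      (⨅ a, (c a + ∫ w, θ w * (γ a w - 1) ∂μ)) - ⨅ a, (c a + ∫ w, θ' w * (γ a w - 1) ∂μ)
        ≤ ∫ w, (θ w - θ' w) * γ₂ w ∂μ := by
  obtain rfl : γ₂ = extremalKernel (fun a w => γ a w - 1) θ θ' := funext hγ₂_def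
  have hκ : ∀ a w, γ a w - 1 ∈ Set.Icc (η' - 1) (Cγ - 1) := fun a w =>
    ⟨sub_le_sub_right (hγ_lb a w) 1, sub_le_sub_right (hγ_ub a w) 1⟩
  have hκ_meas : ∀ a, AEStronglyMeasurable (fun w => γ a w - 1) μ := fun a =>
    (hγ_meas a).sub aestronglyMeasurable_const
  exact ⟨fun w => extremalKernel_mem_Icc fun a => hκ a w,
    ciInf_add_integral_mul_sub_ciInf_le_extremalKernel hc hθ hθ' hκ_meas hκ hγ₂_meas⟩

end Hamiltonian

theorem hamiltonian_kernel_estimate_theta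
    {H K Ξ U : Type*}
    [NormedAddCommGroup H] [InnerProductSpace ℝ H] [CompleteSpace H] [SecondCountableTopology H]
    [MeasurableSpace H] [BorelSpace H]
    [NormedAddCommGroup K] [InnerProductSpace ℝ K] [CompleteSpace K] [SecondCountableTopology K]
    [MeasurableSpace K] [BorelSpace K]
    [NormedAddCommGroup Ξ] [InnerProductSpace ℝ Ξ] [CompleteSpace Ξ] [SecondCountableTopology Ξ]
    [Nonempty U]
    (ν₁ : Measure H) (ν₂ : Measure K) [IsFiniteMeasure ν₁] [IsFiniteMeasure ν₂]
    (Rinv : H →L[ℝ] Ξ)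
    (l : H → K → U → ℝ) (b : H → K → U → H) (ρ : U → Ξ)
    (r : H → K → U → H → ℝ) (γ : U → K → ℝ)
    (Ml Ll M' Lb Lr η Cr η' Cγ : ℝ)
    (hl_bound : ∀ x q a, |l x q a| ≤ Ml)
    (hl_lip : ∀ x x' q q' a, |l x q a - l x' q' a| ≤ Ll * (‖x - x'‖ + ‖q - q'‖))
    (hb_bound : ∀ x q a, ‖b x q a‖ + ‖ρ a‖ ≤ M')
    (hb_lip : ∀ x x' q q' a, ‖b x q a - b x' q' a‖ ≤ Lb * (‖x - x'‖ + ‖q - q'‖))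
    (hη : 0 < η) (hCr : 1 < Cr)
    (hr_lb : ∀ x q a w, η ≤ r x q a w) (hr_ub : ∀ x q a w, r x q a w ≤ Cr)
    (hr_lip : ∀ x x' q q' a w, |r x q a w - r x' q' a w| ≤ Lr * (‖x - x'‖ + ‖q - q'‖))
    (hη' : 0 < η') (hCγ : 1 < Cγ)
    (hγ_lb : ∀ a w, η' ≤ γ a w) (hγ_ub : ∀ a w, γ a w ≤ Cγ)
    (hr_meas : ∀ x q a, Measurable (fun w => r x q a w))
    (hγ_meas : ∀ a, Measurable (fun w => γ a w))
    (ψ : H → K → Ξ → Ξ → Lp ℝ 2 ν₁ → Lp ℝ 2 ν₂ → ℝ)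
    (hψ : ∀ x q z ζ u θ, ψ x q z ζ u θ =
      ⨅ a : U, (l x q a + ⟪z, Rinv (b x q a)⟫ + ⟪ζ, ρ a⟫
        + ∫ w, u w * (r x q a w - 1) ∂ν₁ + ∫ w, θ w * (γ a w - 1) ∂ν₂))
    (x : H) (q : K) (z ζ : Ξ) (u : Lp ℝ 2 ν₁) (θ θ' : Lp ℝ 2 ν₂)
    (γ₂ : K → ℝ) (hγ₂_meas : Measurable γ₂)
    (hγ₂_def : ∀ w, γ₂ w = if θ' w ≤ θ w then ⨆ a : U, (γ a w - 1)
      else ⨅ a : U, (γ a w - 1)) :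
    (∀ w, η' - 1 ≤ γ₂ w ∧ γ₂ w ≤ Cγ - 1) ∧
      ψ x q z ζ u θ - ψ x q z ζ u θ' ≤ ∫ w, (θ w - θ' w) * γ₂ w ∂ν₂ := by
  rw [hψ, hψ]
  exact hamiltonian_kernel_estimate_theta_general
    (bddBelow_range_add_inner_add_inner_add_integral z ζ (hl_bound x q) (hb_bound x q)
      ((Lp.memLp u).integrable one_le_two)
      fun a w => ⟨sub_le_sub_right (hr_lb x q a w) 1, sub_le_sub_right (hr_ub x q a w) 1⟩)
    ((Lp.memLp θ).integrable one_le_two) ((Lp.memLp θ').integrable one_le_two)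
    (fun a => (hγ_meas a).aestronglyMeasurable) hγ_lb hγ_ub hγ₂_meas.aestronglyMeasurable hγ₂_def
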